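/- Let F be a number field with ring of integers 𝔬, (V, φ) nondegenerate of dimension n > 1, L an 𝔬-maximal lattice, h ∈ V with φ[h] = q ≠ 0, W = (Fh)^⊥, M an 𝔬-maximal lattice in W with respect to ψ = φ|_W. Then L ∩ W is 𝔬-maximal in W if and only if φ[h]·(2φ(h,L))^{-2} = [M̃/M]·(2[L̃/L])^{-1} as fractional ideals. -/

import Mathlib

section Defs

variable (𝔬 : Type*) [CommRing 𝔬] (F : Type*) [Field F] [Algebra 𝔬 F]
variable (V : Type*) [AddCommGroup V] [Module F V] [Module 𝔬 V] [IsScalarTower 𝔬 F V]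

/-- `L` is an `𝔬`-lattice in the `F`-vector space `V`: a finitely generated
`𝔬`-submodule containing an `F`-basis of `V`. -/
def IsLattice (L : Submodule 𝔬 V) : Prop :=
  L.FG ∧ Submodule.span F (L : Set V) = ⊤

/-- The `𝔬`-ideal `[M/L]` of `F`, generated by `det α` over all `F`-linear
automorphisms `α` of `V` with `Mα ⊆ L`. -/
def latticeIndex (M L : Submodule 𝔬 V) : Submodule 𝔬 F :=
  Submodule.span 𝔬 {c : F | ∃ α : V ≃ₗ[F] V,
    c = LinearMap.det (α : V →ₗ[F] V) ∧ ∀ x ∈ M, α x ∈ L}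

/-- The dual lattice `L̃ = {x ∈ V ∣ 2φ(x, L) ⊆ 𝔬}`. -/
def dualLattice (φ : LinearMap.BilinForm F V) (L : Submodule 𝔬 V) : Submodule 𝔬 V where
  carrier := {x : V | ∀ y ∈ L, 2 * φ x y ∈ (algebraMap 𝔬 F).range}
  zero_mem' := by
    intro y hy
    exact ⟨0, by simp⟩
  add_mem' := by
    intro a b ha hb y hy
    obtain ⟨u, hu⟩ := ha y hy
    obtain ⟨v, hv⟩ := hb y hy
    refine ⟨u + v, ?_⟩
    rw [map_add, hu, hv, map_add, LinearMap.add_apply]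
    ring
  smul_mem' := by
    intro c x hx y hy
    obtain ⟨u, hu⟩ := hx y hy
    refine ⟨c * u, ?_⟩
    have h1 : (c • x : V) = (algebraMap 𝔬 F c) • x := (algebraMap_smul F c x).symm
    rw [map_mul, hu, h1, map_smul, LinearMap.smul_apply, smul_eq_mul]
    ring

/-- An `𝔬`-maximal lattice with respect to `φ`: maximal among the lattices `N`
with `φ[N] ⊆ 𝔬`. -/
def IsMaximalLattice (φ : LinearMap.BilinForm F V) (L : Submodule 𝔬 V) : Prop :=
  IsLattice 𝔬 F V L ∧ (∀ x ∈ L, φ x x ∈ (algebraMap 𝔬 F).range) ∧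
    ∀ L' : Submodule 𝔬 V, IsLattice 𝔬 F V L' →
      (∀ x ∈ L', φ x x ∈ (algebraMap 𝔬 F).range) → L ≤ L' → L' = L

end Defs

open NumberField

/-!
Put `B = 2φ`. Two facts about discriminant ideals are checked at each maximal ideal `p`, where the
local ring is principal and the discriminant ideal of a lattice is generated by the Gram
determinant of a basis.

* If `B(h, L) = R B(h, v)` with `v ∈ L`, then `v` and a basis of `L ∩ W` form a basis of `L`.
  Replacing `v` by `h` on one or both sides of its Gram matrix makes the first row
  `(B(h, ·), 0, …, 0)`, and hence `B(h, h) [L̃/L] = [Ñ/N] B(h, L)²` for `N = L ∩ W`.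
* If `M` is maximal and `N` is norm integral, then `M̃ ∩ N ≤ M`, so `B` is integral between
  `M̃ ⊔ N` and `M̃ ∩ N`. Take a basis `e` of `M̃` such that the `aᵢ eᵢ` form a basis of `N`, and
  write `aᵢ = uᵢ vᵢ` with `uᵢ` and `vᵢ⁻¹` the coprime numerator and denominator of `aᵢ`. Then
  `uᵢ eᵢ ∈ M̃ ∩ N` and `vᵢ eᵢ ∈ M̃ ⊔ N`, and integrality of the mixed Gram determinant gives
  `[Ñ/N] ≤ [M̃/M]`. A lattice contained in another with the same discriminant ideal is equal to
  it, so `N` is maximal if and only if `[Ñ/N] = [M̃/M]`.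

Taking `N = L ∩ W` in both and cancelling the invertible ideal `B(h, L)²` gives the equivalence.
-/

open Module
open Submodule (span span_le subset_span)
open LinearMap (BilinForm)

section LocalizedSpan

variable {R S V : Type*} [CommRing R] [CommRing S] [Algebra R S] (P : Submonoid R)
  [IsLocalization P S] [AddCommGroup V] [Module R V] [Module S V] [IsScalarTower R S V]

include P

theorem mem_span_iff_exists_smul_mem {X : Submodule R V} {x : V} :
    x ∈ span S (X : Set V) ↔ ∃ s ∈ P, s • x ∈ X := by
  constructor
  · rw [IsLocalization.mem_span_iff P]
    rintro ⟨y, hy, s, rfl⟩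
    refine ⟨s, s.2, ?_⟩
    rw [Submodule.span_eq] at hy
    rwa [← algebraMap_smul S (s : R), smul_smul, IsLocalization.mk'_spec'_mk, map_one, one_smul]
  · rintro ⟨s, hs, hx⟩
    rw [← Submodule.smul_mem_iff_of_isUnit _ (IsLocalization.map_units S ⟨s, hs⟩), algebraMap_smul]
    exact subset_span hx

theorem exists_forall_smul_mem_of_fg {X Y : Submodule R V} (hX : X.FG)
    (h : (X : Set V) ⊆ span S (Y : Set V)) : ∃ s ∈ P, ∀ x ∈ X, s • x ∈ Y := by
  induction X, hX using Submodule.fg_induction with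
  | singleton v =>
    obtain ⟨s, hs, hv⟩ :=
      (mem_span_iff_exists_smul_mem P).1 (h (Submodule.mem_span_singleton_self v))
    refine ⟨s, hs, fun x hx => ?_⟩
    obtain ⟨c, rfl⟩ := Submodule.mem_span_singleton.1 hx
    rw [smul_comm]
    exact Y.smul_mem c hv
  | sup X₁ X₂ _ _ h₁ h₂ =>
    obtain ⟨s, hs, hsX⟩ := h₁ fun x hx => h (Submodule.mem_sup_left hx)
    obtain ⟨t, ht, htX⟩ := h₂ fun x hx => h (Submodule.mem_sup_right hx)
    refine ⟨s * t, mul_mem hs ht, fun x hx => ?_⟩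
    obtain ⟨y, hy, z, hz, rfl⟩ := Submodule.mem_sup.1 hx
    rw [smul_add, mul_smul s t z, mul_comm, mul_smul t s y]
    exact add_mem (Y.smul_mem t (hsX y hy)) (Y.smul_mem s (htX z hz))

end LocalizedSpan

section BaseChange

variable {R S K : Type*} [CommRing R] [CommRing S] [CommRing K] [Algebra R S] [Algebra R K]
  [Algebra S K] [IsScalarTower R S K]

theorem span_one_eq_one : span S ((1 : Submodule R K) : Set K) = 1 := by
  rw [Submodule.one_eq_span, Submodule.span_span_of_tower, Submodule.one_eq_span]

theorem span_mul_eq (I J : Submodule R K) :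
    span S ((I * J : Submodule R K) : Set K) = span S (I : Set K) * span S (J : Set K) := by
  rw [Submodule.span_mul_span, Submodule.mul_eq_span_mul_set, Submodule.span_span_of_tower]

end BaseChange

/-- The discriminant ideal `[X̃/X]` of a lattice `X`, where `X̃` is the dual of `X` under `B`. The
paper's `[L̃/L]` is the case `B = 2φ`. -/
def discriminantIdeal {R K V : Type*} [CommRing R] [Field K] [Algebra R K] [AddCommGroup V]
    [Module K V] [Module R V] [IsScalarTower R K V] (B : BilinForm K V) (X : Submodule R V) :
    Submodule R K :=
  latticeIndex R K V (B.dualSubmodule X) X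

/-- The condition `φ[X] ⊆ R` on a lattice `X`. -/
def IsNormIntegral {R K V : Type*} [CommRing R] [Field K] [Algebra R K] [AddCommGroup V]
    [Module K V] [Module R V] (φ : BilinForm K V) (X : Submodule R V) : Prop :=
  ∀ x ∈ X, φ x x ∈ (1 : Submodule R K)

/-- No vector outside `X` can be adjoined to a norm-integral lattice `X` without destroying norm
integrality. Unlike maximality among lattices, this evidently passes to localizations. -/
def IsSaturated {R K V : Type*} [CommRing R] [Field K] [Algebra R K] [AddCommGroup V]
    [Module K V] [Module R V] [IsScalarTower R K V] (φ : BilinForm K V) (X : Submodule R V) :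
    Prop :=
  ∀ x ∈ ((2 : K) • φ).dualSubmodule X, φ x x ∈ (1 : Submodule R K) → x ∈ X

section LocalizedLattice

variable {R S K V : Type*} [CommRing R] [CommRing S] [Algebra R S] (P : Submonoid R)
  [IsLocalization P S] [Field K] [Algebra R K] [Algebra S K] [IsScalarTower R S K]
  [AddCommGroup V] [Module R V] [Module S V] [Module K V] [IsScalarTower R S V]
  [IsScalarTower R K V] [IsScalarTower S K V]

theorem IsLattice.span_localization (S : Type*) [CommRing S] [Algebra R S] [Module S V]
    [Algebra S K] [IsScalarTower R S V] [IsScalarTower S K V] {X : Submodule R V}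
    (hX : IsLattice R K V X) : IsLattice S K V (span S (X : Set V)) := by
  obtain ⟨⟨t, rfl⟩, ht⟩ := hX
  rw [Submodule.span_span_of_tower] at ht ⊢
  exact ⟨⟨t, rfl⟩, by rw [Submodule.span_span_of_tower, ht]⟩

include P

theorem mem_one_iff_exists_smul_mem_one {c : K} :
    c ∈ (1 : Submodule S K) ↔ ∃ s ∈ P, s • c ∈ (1 : Submodule R K) := by
  rw [← span_one_eq_one (R := R), mem_span_iff_exists_smul_mem P]

theorem dualSubmodule_span_localization (B : BilinForm K V) {X : Submodule R V} (hX : X.FG) :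
    B.dualSubmodule (span S (X : Set V)) = span S (B.dualSubmodule X : Set V) := by
  ext x
  rw [mem_span_iff_exists_smul_mem P]
  constructor
  · intro hx
    have hloc : ((X.map ((B x).restrictScalars R) : Submodule R K) : Set K) ⊆
        span S ((1 : Submodule R K) : Set K) := by
      rintro _ ⟨y, hy, rfl⟩
      rw [span_one_eq_one]
      exact hx y (subset_span hy)
    obtain ⟨s, hs, hsX⟩ := exists_forall_smul_mem_of_fg P (hX.map _) hloc
    exact ⟨s, hs, fun y hy => by simpa using hsX _ (Submodule.mem_map_of_mem hy)⟩
  · rintro ⟨s, hs, hsx⟩ y hy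
    obtain ⟨t, ht, hty⟩ := (mem_span_iff_exists_smul_mem P).1 hy
    refine (mem_one_iff_exists_smul_mem_one P).2 ⟨s * t, mul_mem hs ht, ?_⟩
    simpa [mul_smul] using hsx _ hty

omit [IsScalarTower S K V] in
theorem IsNormIntegral.span_localization {φ : BilinForm K V} {X : Submodule R V}
    (hX : IsNormIntegral φ X) : IsNormIntegral φ (span S (X : Set V)) := by
  intro x hx
  obtain ⟨s, hs, hsx⟩ := (mem_span_iff_exists_smul_mem P).1 hx
  refine (mem_one_iff_exists_smul_mem_one P).2 ⟨s * s, mul_mem hs hs, ?_⟩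
  simpa [mul_smul] using hX _ hsx

theorem IsSaturated.span_localization {φ : BilinForm K V} {X : Submodule R V} (hfg : X.FG)
    (hX : IsSaturated φ X) : IsSaturated φ (span S (X : Set V)) := by
  intro x hx hxx
  rw [dualSubmodule_span_localization P _ hfg, mem_span_iff_exists_smul_mem P] at hx
  obtain ⟨s, hs, hsx⟩ := hx
  obtain ⟨t, ht, htx⟩ := (mem_one_iff_exists_smul_mem_one P).1 hxx
  refine (mem_span_iff_exists_smul_mem P).2 ⟨t * s, mul_mem ht hs, hX _ ?_ ?_⟩
  · simpa [mul_smul] using Submodule.smul_mem _ t hsx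
  · have hscale : φ ((t * s) • x) ((t * s) • x) = (t * s * s) • t • φ x x := by
      simp only [LinearMap.map_smul_of_tower, LinearMap.smul_apply, smul_smul]
      ring_nf
    rw [hscale]
    exact Submodule.smul_mem _ _ htx

omit [IsScalarTower S K V] in
theorem latticeIndex_span_localization {X Y : Submodule R V}
    (hX : X.FG) : latticeIndex S K V (span S (X : Set V)) (span S (Y : Set V)) =
      span S (latticeIndex R K V X Y : Set K) := by
  apply le_antisymm
  · refine span_le.2 ?_
    rintro _ ⟨α, rfl, hα⟩
    have hloc : ((X.map ((α : V →ₗ[K] V).restrictScalars R) : Submodule R V) : Set V) ⊆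
        span S (Y : Set V) := by
      rintro _ ⟨x, hx, rfl⟩
      exact hα x (subset_span hx)
    obtain ⟨s, hs, hsX⟩ := exists_forall_smul_mem_of_fg P (hX.map _) hloc
    have hs0 : algebraMap R K s ≠ 0 := by
      rw [IsScalarTower.algebraMap_apply R S K]
      exact ((IsLocalization.map_units S ⟨s, hs⟩).map (algebraMap S K)).ne_zero
    refine (mem_span_iff_exists_smul_mem P).2 ⟨s ^ finrank K V, pow_mem hs _, subset_span
      ⟨α.trans (LinearEquiv.smulOfNeZero K V _ hs0), ?_, fun x hx => ?_⟩⟩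
    · have hα' : ((α.trans (LinearEquiv.smulOfNeZero K V _ hs0) : V ≃ₗ[K] V) : V →ₗ[K] V) =
          algebraMap R K s • (α : V →ₗ[K] V) := by
        ext x
        simp
      rw [hα', LinearMap.det_smul, Algebra.smul_def, map_pow]
    · simpa using hsX _ (Submodule.mem_map_of_mem hx)
  · rw [latticeIndex.eq_def R, Submodule.span_span_of_tower]
    refine Submodule.span_mono ?_
    rintro _ ⟨α, rfl, hα⟩
    refine ⟨α, rfl, fun x hx => ?_⟩
    obtain ⟨s, hs, hsx⟩ := (mem_span_iff_exists_smul_mem P).1 hx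
    refine (mem_span_iff_exists_smul_mem P).2 ⟨s, hs, ?_⟩
    exact (α : V →ₗ[K] V).map_smul_of_tower s x ▸ hα _ hsx

theorem discriminantIdeal_span_localization (B : BilinForm K V) {X : Submodule R V} (hX : X.FG)
    (hdual : (B.dualSubmodule X).FG) :
    discriminantIdeal B (span S (X : Set V)) = span S (discriminantIdeal B X : Set K) := by
  rw [discriminantIdeal, dualSubmodule_span_localization P B hX,
    latticeIndex_span_localization P hdual, discriminantIdeal]

end LocalizedLattice

section Saturated

variable {R K V : Type*} [CommRing R] [Field K] [Algebra R K] [AddCommGroup V] [Module K V]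
  [Module R V] [IsScalarTower R K V] {φ : BilinForm K V}

theorem IsNormIntegral.le_dualSubmodule (hφ : φ.IsSymm) {X : Submodule R V}
    (hX : IsNormIntegral φ X) : X ≤ ((2 : K) • φ).dualSubmodule X := by
  intro x hx y hy
  have hpolar : ((2 : K) • φ) x y = φ (x + y) (x + y) - φ x x - φ y y := by
    simp only [LinearMap.smul_apply, map_add, LinearMap.add_apply, smul_eq_mul, hφ.eq y x]
    ring
  rw [hpolar]
  exact sub_mem (sub_mem (hX _ (add_mem hx hy)) (hX _ hx)) (hX _ hy)

theorem IsSaturated.sup_le_dualSubmodule_inf (hφ : φ.IsSymm) {M N : Submodule R V}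
    (hM : IsSaturated φ M) (hN : IsNormIntegral φ N) :
    ((2 : K) • φ).dualSubmodule M ⊔ N ≤
      ((2 : K) • φ).dualSubmodule (((2 : K) • φ).dualSubmodule M ⊓ N) :=
  sup_le (fun _ hy x hx => hy x (hM x hx.1 (hN x hx.2)))
    fun _ hy x hx => hN.le_dualSubmodule hφ hy x hx.2

end Saturated

section Gram

variable {K V ι : Type*} [Field K] [AddCommGroup V] [Module K V] [Fintype ι] [DecidableEq ι]

/-- The Gram determinant `det (B(eᵢ, fⱼ))` of a pair of bases. -/
noncomputable def gramDet (B : BilinForm K V) (e f : Basis ι K V) : K :=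
  (LinearMap.toMatrix₂ e f B).det

theorem gramDet_eq_det_mul_det_mul (B : BilinForm K V) (b b' e f : Basis ι K V) :
    gramDet B e f = b.det e * b'.det f * gramDet B b b' := by
  rw [gramDet, ← LinearMap.toMatrix₂_mul_basis_toMatrix b b', Matrix.det_mul, Matrix.det_mul,
    Matrix.det_transpose, b.det_apply, b'.det_apply, gramDet]
  ring

theorem det_dualBasis_eq_gramDet {B : BilinForm K V} (hB : B.Nondegenerate) (e : Basis ι K V) :
    (B.dualBasis hB e).det e = gramDet B e e := by
  rw [Basis.det_apply, ← Matrix.det_transpose, gramDet]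
  congr 1
  ext i j
  rw [Matrix.transpose_apply, Basis.toMatrix_apply, BilinForm.dualBasis_repr_apply,
    LinearMap.toMatrix₂_apply]

theorem gramDet_self_ne_zero {B : BilinForm K V} (hB : B.Nondegenerate) (e : Basis ι K V) :
    gramDet B e e ≠ 0 := by
  rw [← det_dualBasis_eq_gramDet hB]
  exact (Basis.isUnit_det _ e).ne_zero

end Gram

section BasisSpan

variable {R K V ι : Type*} [CommRing R] [IsDomain R] [Field K] [Algebra R K] [IsFractionRing R K]
  [AddCommGroup V] [Module K V] [Module R V] [IsScalarTower R K V] [Fintype ι] [DecidableEq ι]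

omit [IsDomain R] [IsFractionRing R K] in
theorem det_mem_one_of_forall_mem_one {A : Matrix ι ι K} (hA : ∀ i j, A i j ∈ (1 : Submodule R K)) :
    A.det ∈ (1 : Submodule R K) := by
  simp only [Submodule.mem_one] at hA
  choose T hT using hA
  refine Submodule.mem_one.2 ⟨(Matrix.of T).det, ?_⟩
  rw [RingHom.map_det]
  congr 1
  ext i j
  exact hT i j

omit [IsDomain R] [IsFractionRing R K] [Fintype ι] [DecidableEq ι] in
theorem isLattice_span_range [Finite ι] (e : Basis ι K V) :
    IsLattice R K V (span R (Set.range e)) :=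
  ⟨Submodule.fg_span (Set.finite_range e), by rw [Submodule.span_span_of_tower, e.span_eq]⟩

theorem det_mem_one_of_forall_mem_span {e : Basis ι K V} {v : ι → V}
    (hv : ∀ i, v i ∈ span R (Set.range e)) : e.det v ∈ (1 : Submodule R K) := by
  rw [e.det_apply]
  exact det_mem_one_of_forall_mem_one fun i j =>
    Submodule.mem_one.2 ((e.mem_span_iff_repr_mem R _).1 (hv j) i)

theorem latticeIndex_span_range (e f : Basis ι K V) :
    latticeIndex R K V (span R (Set.range e)) (span R (Set.range f)) = span R {e.det f} := by
  refine le_antisymm (span_le.2 ?_) (span_le.2 ?_)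
  · rintro _ ⟨α, rfl, hα⟩
    obtain ⟨s, hs⟩ := Submodule.mem_one.1 <| det_mem_one_of_forall_mem_span (e := f)
      (v := α ∘ e) fun i => hα _ (subset_span ⟨i, rfl⟩)
    have hdet : LinearMap.det (α : V →ₗ[K] V) = e.det f * f.det (α ∘ e) := by
      calc LinearMap.det (α : V →ₗ[K] V) = e.det (α ∘ e) := by
            simpa [e.det_self] using (e.det_comp (α : V →ₗ[K] V) e).symm
        _ = e.det f * f.det (α ∘ e) := by
            conv_lhs => rw [e.det.eq_smul_basis_det f]
            simp
    exact Submodule.mem_span_singleton.2 ⟨s, by rw [hdet, ← hs, Algebra.smul_def, mul_comm]⟩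
  · rintro _ rfl
    refine subset_span ⟨e.equiv f (Equiv.refl ι), ?_, fun x hx => ?_⟩
    · simp
    · have hx' := Submodule.mem_map_of_mem
        (f := ((e.equiv f (Equiv.refl ι) : V ≃ₗ[K] V) : V →ₗ[K] V).restrictScalars R) hx
      rw [Submodule.map_span, ← Set.range_comp] at hx'
      simpa [Function.comp_def] using hx'

theorem discriminantIdeal_span_range {B : BilinForm K V} (hB : B.Nondegenerate)
    (e : Basis ι K V) :
    discriminantIdeal B (span R (Set.range e)) = span R {gramDet B e e} := by
  rw [discriminantIdeal, BilinForm.dualSubmodule_span_of_basis _ hB, latticeIndex_span_range,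
    det_dualBasis_eq_gramDet]

theorem discriminantIdeal_dualSubmodule_span_range {B : BilinForm K V} (hB : B.Nondegenerate)
    (hB' : B.IsSymm) (e : Basis ι K V) :
    discriminantIdeal B (B.dualSubmodule (span R (Set.range e))) =
      span R {(gramDet B e e)⁻¹} := by
  have hdet : e.det (B.dualBasis hB e) = (gramDet B e e)⁻¹ := by
    rw [← det_dualBasis_eq_gramDet hB]
    exact eq_inv_of_mul_eq_one_left (by rw [e.det_mul_det, e.det_self])
  rw [discriminantIdeal, BilinForm.dualSubmodule_dualSubmodule_of_basis _ hB hB',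
    BilinForm.dualSubmodule_span_of_basis _ hB, latticeIndex_span_range, hdet]

omit [Fintype ι] [DecidableEq ι] in
theorem span_range_le_of_discriminantIdeal_le [Finite ι] {B : BilinForm K V} (hB : B.Nondegenerate)
    {l n : Basis ι K V} (hnl : span R (Set.range n) ≤ span R (Set.range l))
    (hdisc : discriminantIdeal B (span R (Set.range l)) ≤
      discriminantIdeal B (span R (Set.range n))) :
    span R (Set.range l) ≤ span R (Set.range n) := by
  classical
  cases nonempty_fintype ι
  rw [discriminantIdeal_span_range hB, discriminantIdeal_span_range hB,
    Submodule.span_singleton_le_iff_mem, Submodule.mem_span_singleton,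
    gramDet_eq_det_mul_det_mul B l l n n] at hdisc
  obtain ⟨s, hs⟩ := hdisc
  let n' : ι → span R (Set.range l) := fun i => ⟨n i, hnl (subset_span ⟨i, rfl⟩)⟩
  have hdet : algebraMap R K ((l.restrictScalars R).det n') = l.det n := by
    rw [Basis.det_apply, Basis.det_apply, RingHom.map_det]
    congr 1
    ext i j
    exact l.restrictScalars_repr_apply R (n' j) i
  have hunit : IsUnit ((l.restrictScalars R).det n') := by
    refine .of_mul_eq_one (s * (l.restrictScalars R).det n') (IsFractionRing.injective R K ?_)
    refine mul_right_cancel₀ (gramDet_self_ne_zero hB l) ?_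
    rw [map_mul, map_mul, hdet, map_one, one_mul]
    rw [Algebra.smul_def] at hs
    linear_combination hs
  have hspan := congrArg (Submodule.map (span R (Set.range l)).subtype)
    ((Basis.is_basis_iff_det (l.restrictScalars R)).2 hunit).2
  rw [Submodule.map_span, ← Set.range_comp, Submodule.map_subtype_top] at hspan
  exact hspan.ge

end BasisSpan

section PrincipalIdealRing

variable {R K V : Type*} [CommRing R] [Field K] [Algebra R K] [IsFractionRing R K]
  [AddCommGroup V] [Module K V] [Module R V] [IsScalarTower R K V]

theorem span_range_extendOfIsLattice {κ : Type*} {X : Submodule R V} [Submodule.IsLattice K X]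
    (b : Basis κ R X) : span R (Set.range (b.extendOfIsLattice K)) = X := by
  have hrange : Set.range (b.extendOfIsLattice K) = X.subtype '' Set.range b := by
    rw [← Set.range_comp]
    exact congrArg Set.range (funext (b.extendOfIsLattice_apply K))
  rw [hrange, ← Submodule.map_span, b.span_eq, Submodule.map_subtype_top]

variable [IsDomain R] [IsPrincipalIdealRing R]

theorem IsLattice.finrank_eq {X : Submodule R V} (hX : IsLattice R K V X) :
    finrank R X = finrank K V :=
  have : Submodule.IsLattice K X := ⟨hX.1, hX.2⟩
  congrArg Cardinal.toNat (Submodule.IsLattice.rank' K X)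

theorem IsLattice.nonempty_basis {X : Submodule R V} (hX : IsLattice R K V X) :
    Nonempty (Basis (Fin (finrank K V)) R X) :=
  have : Submodule.IsLattice K X := ⟨hX.1, hX.2⟩
  have := Submodule.IsLattice.free K X
  ⟨Module.finBasisOfFinrankEq R X hX.finrank_eq⟩

theorem IsLattice.exists_basis_span_range_eq {X : Submodule R V} (hX : IsLattice R K V X) :
    ∃ e : Basis (Fin (finrank K V)) K V, span R (Set.range e) = X :=
  have : Submodule.IsLattice K X := ⟨hX.1, hX.2⟩
  let ⟨b⟩ := hX.nonempty_basis
  ⟨b.extendOfIsLattice K, span_range_extendOfIsLattice b⟩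

theorem IsLattice.exists_elementary_divisors_of_le {X Y : Submodule R V} (hX : IsLattice R K V X)
    (hY : IsLattice R K V Y) (hYX : Y ≤ X) :
    ∃ (e : Basis (Fin (finrank K V)) K V) (a : Fin (finrank K V) → Kˣ),
      span R (Set.range e) = X ∧ span R (Set.range (e.unitsSMul a)) = Y := by
  have : Submodule.IsLattice K X := ⟨hX.1, hX.2⟩
  have : Submodule.IsLattice K Y := ⟨hY.1, hY.2⟩
  obtain ⟨b⟩ := hX.nonempty_basis
  let equiv := Submodule.comapSubtypeEquivOfLe hYX
  obtain ⟨x, a, y, hxy⟩ := Submodule.exists_smith_normal_form_of_rank_eq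
    (N := Y.comap X.subtype) b (by rw [equiv.finrank_eq, hY.finrank_eq, hX.finrank_eq])
  let e := x.extendOfIsLattice K
  let f := (y.map equiv).extendOfIsLattice K
  have hf : ∀ i, f i = algebraMap R K (a i) • e i := fun i => by
    simpa [e, f, equiv] using congrArg Subtype.val (hxy i)
  have ha : ∀ i, algebraMap R K (a i) ≠ 0 := fun i hi => f.ne_zero i (by rw [hf, hi, zero_smul])
  refine ⟨e, fun i => Units.mk0 _ (ha i), span_range_extendOfIsLattice x, ?_⟩
  convert span_range_extendOfIsLattice (y.map equiv)
  ext i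
  rw [Basis.unitsSMul_apply, Units.smul_mk0, ← hf]

open scoped Pointwise in
theorem IsLattice.exists_elementary_divisors {X Y : Submodule R V} (hX : IsLattice R K V X)
    (hY : IsLattice R K V Y) :
    ∃ (e : Basis (Fin (finrank K V)) K V) (a : Fin (finrank K V) → Kˣ),
      span R (Set.range e) = X ∧ span R (Set.range (e.unitsSMul a)) = Y := by
  obtain ⟨s, hs, hsY⟩ := exists_forall_smul_mem_of_fg (S := K) (nonZeroDivisors R) hY.1 (Y := X)
    (by rw [hX.2]; exact fun _ _ => Submodule.mem_top)
  let u : Kˣ :=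
    Units.mk0 (algebraMap R K s) (IsFractionRing.to_map_ne_zero_of_mem_nonZeroDivisors hs)
  have huY : IsLattice R K V (u • Y) := by
    have : Submodule.IsLattice K Y := ⟨hY.1, hY.2⟩
    exact ⟨Submodule.IsLattice.fg, Submodule.IsLattice.span_eq_top⟩
  have hle : u • Y ≤ X := by
    rintro _ ⟨y, hy, rfl⟩
    simpa [u, Units.smul_def] using hsY y hy
  obtain ⟨e, a, he, hea⟩ := hX.exists_elementary_divisors_of_le huY hle
  refine ⟨e, fun i => u⁻¹ * a i, he, ?_⟩
  refine Submodule.map_injective_of_injective (f := DistribSMul.toLinearMap R V u)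
    (MulAction.injective u) (Eq.trans ?_ hea)
  rw [Submodule.map_span, ← Set.range_comp]
  congr 2
  ext i
  simp [Basis.unitsSMul_apply, smul_smul]

theorem exists_units_mul_eq_of_coprime_fraction (a : Kˣ) :
    ∃ (u v : Kˣ) (n d x y : R), u * v = a ∧ (u : K) = algebraMap R K n ∧
      (u : K) = algebraMap R K d * a ∧ (v : K) = algebraMap R K x * a + algebraMap R K y := by
  obtain ⟨n, d, hcop, hnd⟩ := IsFractionRing.exists_reduced_fraction R (a : K)
  have hd : algebraMap R K d ≠ 0 := IsFractionRing.to_map_ne_zero_of_mem_nonZeroDivisors d.2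
  rw [IsFractionRing.mk'_eq_div, div_eq_iff hd] at hnd
  obtain ⟨x, y, hxy⟩ := hcop.isCoprime
  refine ⟨Units.mk0 (algebraMap R K n) (hnd ▸ mul_ne_zero a.ne_zero hd), (Units.mk0 _ hd)⁻¹,
    n, d, x, y, ?_, rfl, ?_, ?_⟩
  · rw [mul_inv_eq_iff_eq_mul]
    exact Units.ext hnd
  · rw [Units.val_mk0, hnd, mul_comm]
  · rw [Units.val_inv_eq_inv_val, Units.val_mk0]
    refine inv_eq_of_mul_eq_one_left ?_
    rw [add_mul, mul_assoc, ← hnd, ← map_mul, ← map_mul, ← map_add, hxy, map_one]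

theorem IsLattice.exists_basis_smul_mem_inf_sup {X Y : Submodule R V} (hX : IsLattice R K V X)
    (hY : IsLattice R K V Y) :
    ∃ (e : Basis (Fin (finrank K V)) K V) (u v : Fin (finrank K V) → Kˣ),
      span R (Set.range e) = X ∧ span R (Set.range (e.unitsSMul (u * v))) = Y ∧
      (∀ i, e.unitsSMul u i ∈ X ⊓ Y) ∧ ∀ i, e.unitsSMul v i ∈ X ⊔ Y := by
  obtain ⟨e, a, rfl, rfl⟩ := hX.exists_elementary_divisors hY
  choose u v n d x y huv hn hd hv using
    fun i => exists_units_mul_eq_of_coprime_fraction (R := R) (a i)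
  obtain rfl : u * v = a := funext huv
  have he i : e i ∈ span R (Set.range e) := subset_span ⟨i, rfl⟩
  have hae i : ((u * v) i : K) • e i ∈ span R (Set.range (e.unitsSMul (u * v))) :=
    subset_span ⟨i, e.unitsSMul_apply i⟩
  refine ⟨e, u, v, rfl, rfl, fun i => ⟨?_, ?_⟩, fun i => ?_⟩ <;>
    rw [e.unitsSMul_apply, Units.smul_def]
  · rw [hn, algebraMap_smul]
    exact Submodule.smul_mem _ _ (he i)
  · rw [hd, mul_smul, algebraMap_smul]
    exact Submodule.smul_mem _ _ (hae i)
  · rw [hv, add_smul, mul_smul, algebraMap_smul, algebraMap_smul]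
    exact add_mem (Submodule.smul_mem _ _ (Submodule.mem_sup_right (hae i)))
      (Submodule.smul_mem _ _ (Submodule.mem_sup_left (he i)))

theorem IsLattice.dualSubmodule {B : BilinForm K V} (hB : B.Nondegenerate) {X : Submodule R V}
    (hX : IsLattice R K V X) : IsLattice R K V (B.dualSubmodule X) := by
  obtain ⟨e, rfl⟩ := hX.exists_basis_span_range_eq
  rw [BilinForm.dualSubmodule_span_of_basis _ hB]
  exact isLattice_span_range _

theorem IsLattice.dualSubmodule_dualSubmodule {B : BilinForm K V} (hB : B.Nondegenerate)
    (hBsymm : B.IsSymm) {X : Submodule R V} (hX : IsLattice R K V X) :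
    B.dualSubmodule (B.dualSubmodule X) = X := by
  obtain ⟨e, rfl⟩ := hX.exists_basis_span_range_eq
  exact BilinForm.dualSubmodule_dualSubmodule_of_basis _ hB hBsymm e

theorem IsSaturated.discriminantIdeal_le {φ : BilinForm K V} (hφ : φ.IsSymm)
    (hB : ((2 : K) • φ).Nondegenerate) {M N : Submodule R V} (hM : IsLattice R K V M)
    (hMsat : IsSaturated φ M) (hN : IsLattice R K V N) (hNint : IsNormIntegral φ N) :
    discriminantIdeal ((2 : K) • φ) N ≤ discriminantIdeal ((2 : K) • φ) M := by
  set B := (2 : K) • φ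
  have hBsymm : B.IsSymm := hφ.smul 2
  obtain ⟨e, u, v, he, rfl, hu, hv⟩ := IsLattice.exists_basis_smul_mem_inf_sup
    (hM.dualSubmodule hB) hN
  have hgram : gramDet B (e.unitsSMul v) (e.unitsSMul u) ∈ (1 : Submodule R K) :=
    det_mem_one_of_forall_mem_one fun i j => by
      rw [LinearMap.toMatrix₂_apply]
      exact hMsat.sup_le_dualSubmodule_inf hφ hNint (hv i) _ (hu j)
  rw [gramDet_eq_det_mul_det_mul B e e, e.det_unitsSMul_self, e.det_unitsSMul_self] at hgram
  obtain ⟨d, hd⟩ := Submodule.mem_one.1 hgram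
  rw [discriminantIdeal_span_range hB,
    ← hM.dualSubmodule_dualSubmodule hB hBsymm, ← he,
    discriminantIdeal_dualSubmodule_span_range hB hBsymm,
    Submodule.span_singleton_le_iff_mem, Submodule.mem_span_singleton]
  -- With `G = gramDet B e e`, `hd` says `d = det u * det v * G`, so that
  -- `gramDet` of the basis `u v e` of `N` is `(det u * det v) ^ 2 * G = d ^ 2 * G⁻¹`.
  refine ⟨d * d, ?_⟩
  rw [gramDet_eq_det_mul_det_mul B e e (e.unitsSMul (u * v)), e.det_unitsSMul_self,
    Algebra.smul_def, map_mul, hd]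
  simp only [Pi.mul_apply, Units.val_mul, Finset.prod_mul_distrib]
  field_simp [gramDet_self_ne_zero hB e]

theorem IsLattice.le_of_discriminantIdeal_le_of_pid {B : BilinForm K V} (hB : B.Nondegenerate)
    {L N : Submodule R V} (hL : IsLattice R K V L) (hN : IsLattice R K V N) (hNL : N ≤ L)
    (hdisc : discriminantIdeal B L ≤ discriminantIdeal B N) : L ≤ N := by
  obtain ⟨l, rfl⟩ := hL.exists_basis_span_range_eq
  obtain ⟨n, rfl⟩ := hN.exists_basis_span_range_eq
  exact span_range_le_of_discriminantIdeal_le hB hNL hdisc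

end PrincipalIdealRing

section Hyperplane

variable {K V : Type*} [Field K] [AddCommGroup V] [Module K V] {k : ℕ}

/-- The basis `u, n₀, n₁, …` of `V` obtained from a basis `n` of the hyperplane `ker f` and a vector
`u` outside it. -/
noncomputable def basisConsKer {f : V →ₗ[K] K} {u : V} (hu : f u ≠ 0)
    (n : Basis (Fin k) K (LinearMap.ker f)) : Basis (Fin (k + 1)) K V :=
  Basis.mkFinCons u n
    (fun c x hx hcx => by
      have := congrArg f hcx
      rw [map_add, map_smul, LinearMap.mem_ker.1 hx, map_zero, add_zero, smul_eq_mul] at this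
      exact (mul_eq_zero.1 this).resolve_right hu)
    fun z => ⟨-(f z / f u), by
      rw [LinearMap.mem_ker, map_add, map_smul, smul_eq_mul, neg_mul, div_mul_cancel₀ _ hu,
        add_neg_cancel]⟩

@[simp]
theorem basisConsKer_zero {f : V →ₗ[K] K} {u : V} (hu : f u ≠ 0)
    (n : Basis (Fin k) K (LinearMap.ker f)) : basisConsKer hu n 0 = u := by
  rw [basisConsKer, Basis.coe_mkFinCons, Fin.cons_zero]

@[simp]
theorem basisConsKer_succ {f : V →ₗ[K] K} {u : V} (hu : f u ≠ 0)
    (n : Basis (Fin k) K (LinearMap.ker f)) (i : Fin k) : basisConsKer hu n i.succ = n i := by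
  rw [basisConsKer, Basis.coe_mkFinCons, Fin.cons_succ, Function.comp_apply]

theorem gramDet_basisConsKer (B : BilinForm K V) {h u : V} (hh : B h h ≠ 0) (hu : B h u ≠ 0)
    (n : Basis (Fin k) K (LinearMap.ker (B h))) :
    gramDet B (basisConsKer hh n) (basisConsKer hu n) =
      B h u * gramDet (B.restrict (LinearMap.ker (B h))) n n := by
  have hminor : (LinearMap.toMatrix₂ (basisConsKer hh n) (basisConsKer hu n) B).submatrix
      Fin.succ (Fin.succAbove 0) = LinearMap.toMatrix₂ n n (B.restrict (LinearMap.ker (B h))) := by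
    ext i j
    simp
  rw [gramDet, Matrix.det_succ_row_zero, Fin.sum_univ_succ, Finset.sum_eq_zero, hminor, gramDet]
  · simp
  · intro j _
    simp

theorem apply_self_mul_gramDet_basisConsKer (B : BilinForm K V) {h v : V} (hh : B h h ≠ 0)
    (hv : B h v ≠ 0) (n : Basis (Fin k) K (LinearMap.ker (B h))) :
    B h h * gramDet B (basisConsKer hv n) (basisConsKer hv n) =
      B h v ^ 2 * gramDet (B.restrict (LinearMap.ker (B h))) n n := by
  have hvv := gramDet_eq_det_mul_det_mul B (basisConsKer hh n) (basisConsKer hv n)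
    (basisConsKer hv n) (basisConsKer hv n)
  have hhv := gramDet_eq_det_mul_det_mul B (basisConsKer hh n) (basisConsKer hh n)
    (basisConsKer hh n) (basisConsKer hv n)
  rw [Basis.det_self, mul_one, gramDet_basisConsKer] at hvv
  rw [Basis.det_self, one_mul, gramDet_basisConsKer, gramDet_basisConsKer] at hhv
  rw [hvv]
  linear_combination -B h v * hhv

end Hyperplane

/-- The fractional ideal `B(h, X)`. -/
def pairingIdeal {R K V : Type*} [CommRing R] [Field K] [Algebra R K] [AddCommGroup V]
    [Module K V] [Module R V] (B : BilinForm K V) (h : V) (X : Submodule R V) : Submodule R K :=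
  span R (B h '' X)

/-- The intersection `X ∩ W` as a submodule of `W`. -/
def interSubspace {R K V : Type*} [CommRing R] [Field K] [Algebra R K] [AddCommGroup V]
    [Module K V] [Module R V] [IsScalarTower R K V] (X : Submodule R V) (W : Submodule K V) :
    Submodule R W :=
  (X ⊓ W.restrictScalars R).comap (W.subtype.restrictScalars R)

section InterSubspace

variable {R K V : Type*} [CommRing R] [Field K] [Algebra R K] [AddCommGroup V] [Module K V]
  [Module R V] [IsScalarTower R K V] {X : Submodule R V} {W : Submodule K V}

theorem mem_interSubspace {x : W} : x ∈ interSubspace X W ↔ (x : V) ∈ X :=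
  ⟨fun hx => hx.1, fun hx => ⟨hx, x.2⟩⟩

protected theorem IsNormIntegral.interSubspace {φ : BilinForm K V} (hX : IsNormIntegral φ X) :
    IsNormIntegral (φ.restrict W) (interSubspace X W) :=
  fun x hx => hX x (mem_interSubspace.1 hx)

protected theorem IsLattice.interSubspace [IsNoetherianRing R] [IsFractionRing R K]
    (hX : IsLattice R K V X) (W : Submodule K V) : IsLattice R K W (interSubspace X W) := by
  constructor
  · have hnoeth : IsNoetherian R X := isNoetherian_of_fg_of_noetherian X hX.1
    refine Submodule.fg_of_fg_map_injective (W.subtype.restrictScalars R)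
      Subtype.val_injective (isNoetherian_submodule.1 hnoeth _ ?_)
    rintro _ ⟨x, hx, rfl⟩
    exact mem_interSubspace.1 hx
  · refine eq_top_iff.2 fun w _ => (mem_span_iff_exists_smul_mem (nonZeroDivisors R)).2 ?_
    obtain ⟨s, hs, hsw⟩ := (mem_span_iff_exists_smul_mem (S := K) (nonZeroDivisors R)).1
      (hX.2 ▸ Submodule.mem_top : (w : V) ∈ span K (X : Set V))
    exact ⟨s, hs, mem_interSubspace.2 hsw⟩

theorem interSubspace_span_localization {S : Type*} [CommRing S] [Algebra R S] (P : Submonoid R)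
    [IsLocalization P S] [Algebra S K] [Module S V] [IsScalarTower R S V] [IsScalarTower S K V]
    [IsScalarTower R S K] :
    interSubspace (span S (X : Set V)) W = span S (interSubspace X W : Set W) := by
  ext x
  simp only [mem_interSubspace, mem_span_iff_exists_smul_mem P, Submodule.coe_smul_of_tower]

omit [IsScalarTower R K V] in
theorem pairingIdeal_span_localization {S : Type*} [CommRing S] [Algebra R S] [Algebra S K]
    [Module S V] [IsScalarTower R S K] [IsScalarTower S K V]
    (B : BilinForm K V) (h : V) (X : Submodule R V) :
    pairingIdeal B h (span S (X : Set V)) = span S (pairingIdeal B h X : Set K) := by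
  have := Submodule.map_span ((B h).restrictScalars S) (X : Set V)
  rw [pairingIdeal, pairingIdeal, Submodule.span_span_of_tower]
  exact (congrArg (fun Y : Submodule S K => span S (Y : Set K)) this).trans (Submodule.span_eq _)

theorem pairingIdeal_eq_map (B : BilinForm K V) (h : V) (X : Submodule R V) :
    pairingIdeal B h X = X.map ((B h).restrictScalars R) := by
  rw [pairingIdeal, ← LinearMap.coe_restrictScalars R, ← Submodule.map_span, Submodule.span_eq]

protected theorem IsLattice.pairingIdeal (hX : IsLattice R K V X) {B : BilinForm K V} {h : V}
    (hh : B h ≠ 0) : IsLattice R K K (pairingIdeal B h X) := by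
  refine ⟨pairingIdeal_eq_map B h X ▸ hX.1.map _, ?_⟩
  rw [pairingIdeal, Submodule.span_span_of_tower, ← Submodule.map_span, hX.2, Submodule.map_top,
    LinearMap.range_eq_top]
  exact LinearMap.surjective hh

end InterSubspace

section DiscriminantIdentity

variable {R K V : Type*} [CommRing R] [Field K] [Algebra R K]
  [AddCommGroup V] [Module K V] [Module R V] [IsScalarTower R K V]

theorem restrict_ker_nondegenerate {B : BilinForm K V} (hB : B.Nondegenerate) (hBsymm : B.IsSymm)
    {h : V} (hh : B h h ≠ 0) : (B.restrict (LinearMap.ker (B h))).Nondegenerate := by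
  have hW := B.restrict_nondegenerate_orthogonal_spanSingleton hB hBsymm.isRefl hh
  rw [BilinForm.orthogonal_span_singleton_eq_toLin_ker] at hW
  exact hW

theorem span_range_basisConsKer {f : V →ₗ[K] K} {v : V} (hv : f v ≠ 0) {k : ℕ}
    {n : Basis (Fin k) K (LinearMap.ker f)} {L : Submodule R V} (hvL : v ∈ L)
    (hn : span R (Set.range n) = interSubspace L (LinearMap.ker f))
    (hf : ∀ x ∈ L, f x ∈ span R {f v}) : span R (Set.range (basisConsKer hv n)) = L := by
  have hnL : ∀ i, (n i : V) ∈ L := fun i =>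
    mem_interSubspace.1 (hn ▸ subset_span (Set.mem_range_self i))
  apply le_antisymm
  · rw [span_le, Set.range_subset_iff]
    exact Fin.cases (by simpa using hvL) (by simpa using hnL)
  · intro x hx
    obtain ⟨s, hs⟩ := Submodule.mem_span_singleton.1 (hf x hx)
    have hker : x - s • v ∈ LinearMap.ker f := by
      rw [LinearMap.mem_ker, map_sub, LinearMap.map_smul_of_tower, hs, sub_self]
    have hxn : (⟨x - s • v, hker⟩ : LinearMap.ker f) ∈ span R (Set.range n) :=
      hn ▸ mem_interSubspace.2 (sub_mem hx (L.smul_mem s hvL))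
    have hle : (span R (Set.range n)).map ((LinearMap.ker f).subtype.restrictScalars R) ≤
        span R (Set.range (basisConsKer hv n)) := by
      rw [Submodule.map_span, ← Set.range_comp, span_le, Set.range_subset_iff]
      exact fun i => subset_span ⟨i.succ, basisConsKer_succ hv n i⟩
    rw [← sub_add_cancel x (s • v)]
    exact add_mem (hle (Submodule.mem_map_of_mem hxn))
      (Submodule.smul_mem _ s (subset_span ⟨0, basisConsKer_zero hv n⟩))

variable [IsDomain R] [IsPrincipalIdealRing R] [IsFractionRing R K]

theorem IsLattice.exists_span_apply_eq_pairingIdeal {B : BilinForm K V} {h : V} (hh : B h ≠ 0)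
    {L : Submodule R V} (hL : IsLattice R K V L) :
    ∃ v ∈ L, B h v ≠ 0 ∧ span R {B h v} = pairingIdeal B h L := by
  have hlat := hL.pairingIdeal hh
  let J : FractionalIdeal (nonZeroDivisors R) K := ⟨_, FractionalIdeal.isFractional_of_fg hlat.1⟩
  obtain ⟨c, hc⟩ : ∃ c, pairingIdeal B h L = span R {c} := (FractionalIdeal.isPrincipal J).principal
  have hcmem : c ∈ pairingIdeal B h L := hc ▸ Submodule.mem_span_singleton_self c
  obtain ⟨v, hvL, rfl⟩ := pairingIdeal_eq_map B h L ▸ hcmem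
  refine ⟨v, hvL, fun hv => ?_, hc.symm⟩
  have htop := hlat.2
  rw [hc, Submodule.span_span_of_tower, show span K {((B h).restrictScalars R) v} = ⊥ from
    Submodule.span_singleton_eq_bot.2 hv] at htop
  exact bot_ne_top htop

theorem span_apply_self_mul_discriminantIdeal_of_pid {B : BilinForm K V}
    (hB : B.Nondegenerate) (hBsymm : B.IsSymm) {h : V} (hh : B h h ≠ 0) {L : Submodule R V}
    (hL : IsLattice R K V L) :
    span R {B h h} * discriminantIdeal B L =
      discriminantIdeal (B.restrict (LinearMap.ker (B h))) (interSubspace L (LinearMap.ker (B h))) *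
        pairingIdeal B h L ^ 2 := by
  obtain ⟨n, hn⟩ := (hL.interSubspace (LinearMap.ker (B h))).exists_basis_span_range_eq
  obtain ⟨v, hvL, hv0, hv⟩ := hL.exists_span_apply_eq_pairingIdeal (B := B) (h := h)
    fun h0 => hh (by rw [h0, LinearMap.zero_apply])
  have hspan : span R (Set.range (basisConsKer hv0 n)) = L :=
    span_range_basisConsKer hv0 hvL hn fun x hx => hv ▸ subset_span ⟨x, hx, rfl⟩
  rw [← hv, ← hn]
  nth_rw 1 [← hspan]
  rw [discriminantIdeal_span_range hB,
    discriminantIdeal_span_range (restrict_ker_nondegenerate hB hBsymm hh),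
    Submodule.span_pow, Set.singleton_pow, Submodule.span_mul_span, Submodule.span_mul_span,
    Set.singleton_mul_singleton, Set.singleton_mul_singleton,
    apply_self_mul_gramDet_basisConsKer B hh hv0, mul_comm]

end DiscriminantIdentity

theorem dualSubmodule_fg {R K V : Type*} [CommRing R] [IsNoetherianRing R] [Field K] [Algebra R K]
    [AddCommGroup V] [Module K V] [Module R V] [IsScalarTower R K V] {B : BilinForm K V}
    (hB : B.Nondegenerate) {X : Submodule R V} (hX : IsLattice R K V X) :
    (B.dualSubmodule X).FG := by
  classical
  have : FiniteDimensional K V := ⟨hX.2 ▸ (hX.span_localization K).1⟩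
  let b := Basis.ofSpan hX.2.ge
  have hbX : span R (Set.range b) ≤ X := span_le.2 (Basis.ofSpan_subset hX.2.ge)
  have hle : B.dualSubmodule X ≤ span R (Set.range (B.dualBasis hB b)) := by
    rw [← BilinForm.dualSubmodule_span_of_basis]
    exact fun x hx y hy => hx y (hbX hy)
  have hnoeth := isNoetherian_of_fg_of_noetherian _
    (Submodule.fg_span (R := R) (Set.finite_range (B.dualBasis hB b)))
  exact isNoetherian_submodule.1 hnoeth _ hle

section Maximal

variable {R K V : Type*} [CommRing R] [Field K] [Algebra R K] [AddCommGroup V] [Module K V]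
  [Module R V] [IsScalarTower R K V] {φ : BilinForm K V} {M : Submodule R V}

omit [IsScalarTower R K V] in
theorem isMaximalLattice_iff : IsMaximalLattice R K V φ M ↔
    IsLattice R K V M ∧ IsNormIntegral φ M ∧
      ∀ N, IsLattice R K V N → IsNormIntegral φ N → M ≤ N → N = M := by
  simp only [IsMaximalLattice, IsNormIntegral, Submodule.mem_one, RingHom.mem_range]

theorem IsNormIntegral.sup_span_singleton (hφ : φ.IsSymm) (hM : IsNormIntegral φ M) {x : V}
    (hx : x ∈ ((2 : K) • φ).dualSubmodule M) (hxx : φ x x ∈ (1 : Submodule R K)) :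
    IsNormIntegral φ (M ⊔ span R {x}) := by
  intro z hz
  obtain ⟨m, hm, y, hy, rfl⟩ := Submodule.mem_sup.1 hz
  obtain ⟨a, rfl⟩ := Submodule.mem_span_singleton.1 hy
  have hexpand : φ (m + a • x) (m + a • x) = φ m m + a • ((2 : K) • φ) x m + (a * a) • φ x x := by
    simp only [map_add, LinearMap.map_smul_of_tower, LinearMap.add_apply, LinearMap.smul_apply,
      mul_smul, smul_eq_mul, hφ.eq m x, two_mul, smul_add]
    abel
  rw [hexpand]
  exact add_mem (add_mem (hM m hm) (Submodule.smul_mem _ a (hx m hm))) (Submodule.smul_mem _ _ hxx)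

theorem IsMaximalLattice.isSaturated (hφ : φ.IsSymm) (hM : IsMaximalLattice R K V φ M) :
    IsSaturated φ M := by
  obtain ⟨hlat, hint, hmax⟩ := isMaximalLattice_iff.1 hM
  intro x hx hxx
  have hsup : M ⊔ span R {x} = M :=
    hmax _ ⟨hlat.1.sup (Submodule.fg_span_singleton x),
      eq_top_iff.2 (hlat.2 ▸ Submodule.span_mono (SetLike.coe_subset_coe.2 le_sup_left))⟩
      (hint.sup_span_singleton hφ hx hxx) le_sup_left
  exact hsup ▸ Submodule.mem_sup_right (Submodule.mem_span_singleton_self x)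

end Maximal

section DedekindDomain

variable {R K V : Type*} [CommRing R] [IsDedekindDomain R] [Field K] [Algebra R K]
  [IsFractionRing R K] [AddCommGroup V] [Module K V] [Module R V] [IsScalarTower R K V]

/-- The local ring of `R` at `p`, realized inside the fraction field so that it acts on the same
vector space as `R`. -/
noncomputable abbrev localSubring (K : Type*) [Field K] [Algebra R K] [IsFractionRing R K]
    (p : Ideal R) [p.IsPrime] : Subalgebra R K :=
  Localization.subalgebra.ofField K p.primeCompl p.primeCompl_le_nonZeroDivisors

instance (p : Ideal R) [p.IsPrime] : IsPrincipalIdealRing (localSubring K p) :=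
  have := IsLocalization.isDedekindDomain R p.primeCompl_le_nonZeroDivisors (localSubring K p)
  have := IsLocalization.AtPrime.isLocalRing (localSubring K p) p
  .of_finite_maximals <| (Set.finite_singleton (IsLocalRing.maximalIdeal (localSubring K p))).subset
    fun _ hI => IsLocalRing.eq_maximalIdeal hI

theorem le_of_forall_span_localSubring_le {X Y : Submodule R V}
    (hXY : ∀ (p : Ideal R) [p.IsMaximal],
      span (localSubring K p) (X : Set V) ≤ span (localSubring K p) (Y : Set V)) : X ≤ Y := by
  intro x hx
  let I : Ideal R := Y.comap (LinearMap.toSpanSingleton R V x)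
  have hI : I = ⊤ := by
    by_contra hne
    obtain ⟨p, hp, hIp⟩ := Ideal.exists_le_maximal I hne
    obtain ⟨s, hs, hsx⟩ := (mem_span_iff_exists_smul_mem p.primeCompl).1 (hXY p (subset_span hx))
    exact hs (hIp hsx)
  simpa [I] using (Ideal.eq_top_iff_one I).1 hI

theorem span_apply_self_mul_discriminantIdeal {B : BilinForm K V} (hB : B.Nondegenerate)
    (hBsymm : B.IsSymm) {h : V} (hh : B h h ≠ 0) {L : Submodule R V} (hL : IsLattice R K V L) :
    span R {B h h} * discriminantIdeal B L =
      discriminantIdeal (B.restrict (LinearMap.ker (B h))) (interSubspace L (LinearMap.ker (B h))) *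
        pairingIdeal B h L ^ 2 := by
  have hlocal (p : Ideal R) [p.IsMaximal] :=
    span_apply_self_mul_discriminantIdeal_of_pid hB hBsymm hh
      (hL.span_localization (localSubring K p))
  have hN := hL.interSubspace (LinearMap.ker (B h))
  have hBW := restrict_ker_nondegenerate hB hBsymm hh
  have hspan (p : Ideal R) [p.IsMaximal] : span (localSubring K p)
      ((span R {B h h} * discriminantIdeal B L : Submodule R K) : Set K) =
      span (localSubring K p) ((discriminantIdeal (B.restrict (LinearMap.ker (B h)))
        (interSubspace L (LinearMap.ker (B h))) * pairingIdeal B h L ^ 2 : Submodule R K) : Set K)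
      := by
    rw [pow_two, span_mul_eq, span_mul_eq, span_mul_eq, Submodule.span_span_of_tower,
      ← discriminantIdeal_span_localization p.primeCompl B hL.1 (dualSubmodule_fg hB hL),
      ← discriminantIdeal_span_localization p.primeCompl _ hN.1 (dualSubmodule_fg hBW hN),
      ← pairingIdeal_span_localization, ← interSubspace_span_localization p.primeCompl, hlocal p,
      pow_two]
  exact le_antisymm (le_of_forall_span_localSubring_le fun p _ => (hspan p).le)
    (le_of_forall_span_localSubring_le fun p _ => (hspan p).ge)

theorem IsMaximalLattice.discriminantIdeal_le {φ : BilinForm K V} (hφ : φ.IsSymm)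
    (hB : ((2 : K) • φ).Nondegenerate) {M N : Submodule R V} (hM : IsMaximalLattice R K V φ M)
    (hN : IsLattice R K V N) (hNint : IsNormIntegral φ N) :
    discriminantIdeal ((2 : K) • φ) N ≤ discriminantIdeal ((2 : K) • φ) M := by
  refine le_of_forall_span_localSubring_le (K := K) fun p _ => ?_
  rw [← discriminantIdeal_span_localization p.primeCompl _ hN.1 (dualSubmodule_fg hB hN),
    ← discriminantIdeal_span_localization p.primeCompl _ hM.1.1 (dualSubmodule_fg hB hM.1)]
  exact ((hM.isSaturated hφ).span_localization p.primeCompl hM.1.1).discriminantIdeal_le hφ hB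
    (hM.1.span_localization _) (hN.span_localization _) (hNint.span_localization p.primeCompl)

theorem IsLattice.le_of_discriminantIdeal_le {B : BilinForm K V} (hB : B.Nondegenerate)
    {L N : Submodule R V} (hL : IsLattice R K V L) (hN : IsLattice R K V N) (hNL : N ≤ L)
    (hdisc : discriminantIdeal B L ≤ discriminantIdeal B N) : L ≤ N := by
  refine le_of_forall_span_localSubring_le (K := K) fun p _ =>
    (hL.span_localization (localSubring K p)).le_of_discriminantIdeal_le_of_pid hB
      (hN.span_localization (localSubring K p)) (Submodule.span_mono hNL) ?_
  rw [discriminantIdeal_span_localization p.primeCompl _ hL.1 (dualSubmodule_fg hB hL),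
    discriminantIdeal_span_localization p.primeCompl _ hN.1 (dualSubmodule_fg hB hN)]
  exact Submodule.span_mono hdisc

theorem IsMaximalLattice.isMaximalLattice_iff_discriminantIdeal_eq {φ : BilinForm K V}
    (hφ : φ.IsSymm) (hB : ((2 : K) • φ).Nondegenerate) {M N : Submodule R V}
    (hM : IsMaximalLattice R K V φ M) (hN : IsLattice R K V N) (hNint : IsNormIntegral φ N) :
    IsMaximalLattice R K V φ N ↔
      discriminantIdeal ((2 : K) • φ) N = discriminantIdeal ((2 : K) • φ) M := by
  constructor
  · intro hNmax
    exact (hM.discriminantIdeal_le hφ hB hN hNint).antisymm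
      (hNmax.discriminantIdeal_le hφ hB hM.1 (isMaximalLattice_iff.1 hM).2.1)
  · intro hdisc
    refine isMaximalLattice_iff.2 ⟨hN, hNint, fun L hL hLint hNL => le_antisymm ?_ hNL⟩
    exact hL.le_of_discriminantIdeal_le hB hN hNL
      ((hM.discriminantIdeal_le hφ hB hL hLint).trans_eq hdisc.symm)

theorem IsLattice.isUnit {J : Submodule R K} (hJ : IsLattice R K K J) : IsUnit J := by
  let I : FractionalIdeal (nonZeroDivisors R) K := ⟨J, FractionalIdeal.isFractional_of_fg hJ.1⟩
  have hI : I ≠ 0 := by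
    intro h0
    have hJ0 : J = ⊥ := (congrArg (fun I : FractionalIdeal _ K => (I : Submodule R K)) h0).trans
      FractionalIdeal.coe_zero
    have htop := hJ.2
    rw [hJ0, Submodule.bot_coe, Submodule.span_zero_singleton] at htop
    exact bot_ne_top htop
  exact (IsUnit.mk0 I hI).map (FractionalIdeal.coeSubmoduleHom (nonZeroDivisors R) K)

end DedekindDomain

section Main

variable {R K V : Type*} [CommRing R] [Field K] [Algebra R K] [AddCommGroup V] [Module K V]
  [Module R V] [IsScalarTower R K V]

theorem dualLattice_eq_dualSubmodule (φ : BilinForm K V) (X : Submodule R V) :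
    dualLattice R K V φ X = ((2 : K) • φ).dualSubmodule X := by
  ext x
  simp only [BilinForm.mem_dualSubmodule, Submodule.mem_one, LinearMap.smul_apply, smul_eq_mul]
  rfl

theorem latticeIndex_dualLattice (φ : BilinForm K V) (X : Submodule R V) :
    latticeIndex R K V (dualLattice R K V φ X) X = discriminantIdeal ((2 : K) • φ) X := by
  rw [dualLattice_eq_dualSubmodule, discriminantIdeal]

omit [IsScalarTower R K V] in
theorem pairingIdeal_smul (c : K) (φ : BilinForm K V) (h : V) (X : Submodule R V) :
    pairingIdeal (c • φ) h X = span R {c} * pairingIdeal φ h X := by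
  rw [pairingIdeal, pairingIdeal, Submodule.span_mul_span, Set.singleton_mul, Set.image_image]
  rfl

theorem nondegenerate_smul {φ : BilinForm K V} (hsym : ∀ x y, φ x y = φ y x)
    (hnd : ∀ x, (∀ y, φ x y = 0) → x = 0) {c : K} (hc : c ≠ 0) : (c • φ).Nondegenerate := by
  have hsep : ∀ x, (∀ y, (c • φ) x y = 0) → x = 0 := fun x hx =>
    hnd x fun y => (mul_eq_zero.1 (hx y)).resolve_left hc
  refine ⟨hsep, fun x hx => hsep x fun y => ?_⟩
  rw [← hx y, LinearMap.smul_apply, LinearMap.smul_apply, LinearMap.smul_apply,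
    LinearMap.smul_apply, hsym]

theorem intersection_maximal_iff_discriminant_relation_general [IsDedekindDomain R]
    [IsFractionRing R K] [NeZero (2 : K)]
    (φ : BilinForm K V) (hsym : ∀ x y, φ x y = φ y x) (hnd : ∀ x, (∀ y, φ x y = 0) → x = 0)
    (L : Submodule R V) (hL : IsLattice R K V L) (hLint : IsNormIntegral φ L)
    (q : K) (hq : q ≠ 0) (h : V) (hh : φ h h = q)
    (W : Submodule K V) (hW : W = LinearMap.ker (φ.flip h))
    (M : Submodule R W) (hM : IsMaximalLattice R K W (φ.restrict W) M) :
    IsMaximalLattice R K W (φ.restrict W) (interSubspace L W) ↔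
      span R {2 * q} * latticeIndex R K V (dualLattice R K V φ L) L =
        latticeIndex R K W (dualLattice R K W (φ.restrict W) M) M *
          (span R {(2 : K)} * pairingIdeal φ h L) ^ 2 := by
  set B : BilinForm K V := (2 : K) • φ with hBdef
  have hB : B.Nondegenerate := nondegenerate_smul hsym hnd two_ne_zero
  have hBsymm : B.IsSymm := ⟨fun x y => by simp [B, hsym x y]⟩
  have hBhh : B h h = 2 * q := hh ▸ rfl
  have hne : B h h ≠ 0 := hBhh ▸ mul_ne_zero two_ne_zero hq
  obtain rfl : W = LinearMap.ker (B h) := by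
    rw [hW, hBdef, LinearMap.smul_apply, LinearMap.ker_smul _ _ two_ne_zero]
    exact congrArg LinearMap.ker (LinearMap.ext fun x => hsym x h)
  have hBW := restrict_ker_nondegenerate hB hBsymm hne
  have hφW : (φ.restrict (LinearMap.ker (B h))).IsSymm := ⟨fun x y => hsym x y⟩
  have hunit : IsUnit (pairingIdeal B h L ^ 2) :=
    (hL.pairingIdeal fun h0 => hne (by rw [h0, LinearMap.zero_apply])).isUnit.pow 2
  rw [hM.isMaximalLattice_iff_discriminantIdeal_eq hφW hBW (hL.interSubspace _)
    hLint.interSubspace, latticeIndex_dualLattice, latticeIndex_dualLattice,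
    ← pairingIdeal_smul, ← hBhh, span_apply_self_mul_discriminantIdeal hB hBsymm hne hL]
  exact hunit.mul_left_inj.symm

end Main

/-- Over a number field, with `L` an `𝔬`-maximal lattice in `(V, φ)`,
`h ∈ V` with `φ[h] = q ≠ 0`, `W = (Fh)^⊥` and `M` an `𝔬`-maximal lattice in
`(W, ψ)`: the lattice `L ∩ W` is `𝔬`-maximal in `W` if and only if
`φ[h]·(2φ(h,L))^{-2} = [M̃/M]·(2[L̃/L])^{-1}`, stated here in the
cross-multiplied form `2q·[L̃/L] = [M̃/M]·(2φ(h,L))²`. -/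
theorem intersection_maximal_iff_discriminant_relation
    {F : Type*} [Field F] [NumberField F]
    {V : Type*} [AddCommGroup V] [Module F V] [FiniteDimensional F V]
    [Module (𝓞 F) V] [IsScalarTower (𝓞 F) F V]
    (hdim : 1 < Module.finrank F V)
    (φ : LinearMap.BilinForm F V) (hsym : ∀ x y, φ x y = φ y x)
    (hnd : ∀ x : V, (∀ y : V, φ x y = 0) → x = 0)
    (L : Submodule (𝓞 F) V) (hL : IsMaximalLattice (𝓞 F) F V φ L)
    (q : F) (hq : q ≠ 0) (h : V) (hh : φ h h = q)
    (W : Submodule F V) (hW : W = LinearMap.ker (φ.flip h))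
    (M : Submodule (𝓞 F) ↥W)
    (hM : IsMaximalLattice (𝓞 F) F ↥W (φ.restrict W) M) :
    IsMaximalLattice (𝓞 F) F ↥W (φ.restrict W)
        ((L ⊓ W.restrictScalars (𝓞 F)).comap ((W.subtype).restrictScalars (𝓞 F)))
      ↔
    Submodule.span (𝓞 F) {2 * q} *
        latticeIndex (𝓞 F) F V (dualLattice (𝓞 F) F V φ L) L =
      latticeIndex (𝓞 F) F ↥W (dualLattice (𝓞 F) F ↥W (φ.restrict W) M) M *
        (Submodule.span (𝓞 F) {(2 : F)} *
          Submodule.span (𝓞 F) ((fun x => φ h x) '' (L : Set V))) ^ 2 := by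
  exact intersection_maximal_iff_discriminant_relation_general φ hsym hnd L hL.1
    (isMaximalLattice_iff.1 hL).2.1 q hq h hh W hW M hM
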